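/- Assume the local setting with κ_v = 1, i.e. |1 − q|_v < |p|_v^{1/(p−1)}. Let μ ≥ 1 and let a_0, …, a_{μ−1} ∈ K_v(x). Let G(x) be the μ×μ matrix whose entries in position (j+1, j) equal 1 for 1 ≤ j ≤ μ−1, whose last column is (a_0(x), a_1(x), …, a_{μ−1}(x))^T, and whose remaining entries are 0 (the matrix of the operator Δ_q in a cyclic basis), and define G_n and χ_v as usual. If max_{0≤i≤μ−1} |a_i(x)|_{v,Gauss} > 1, then χ_v = |p|_v^{1/(p−1)} / max_{0≤i≤μ−1} |a_i(x)|_{v,Gauss}^{1/(μ−i)}. -/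

import Mathlib

open Filter
open scoped ENNReal

noncomputable section

variable {Kv : Type*} [NormedField Kv]

/-- `[n]_q = 1 + q + ⋯ + q^{n-1}`. -/
def qNat (q : Kv) (n : ℕ) : Kv := ∑ i ∈ Finset.range n, q ^ i

/-- `[n]_q! = [1]_q ⋯ [n]_q`. -/
def qFactorial (q : Kv) : ℕ → Kv
  | 0 => 1
  | n + 1 => qFactorial q n * qNat q (n + 1)

/-- The Gaussian binomial coefficient `binom(n,i)_q`. -/
def qBinom (q : Kv) (n i : ℕ) : Kv := qFactorial q n / (qFactorial q i * qFactorial q (n - i))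

/-- The substitution `x ↦ qx` on rational functions. -/
def ratSubst (q : Kv) (f : RatFunc Kv) : RatFunc Kv :=
  algebraMap (Polynomial Kv) (RatFunc Kv) (f.num.comp (Polynomial.C q * Polynomial.X)) /
    algebraMap (Polynomial Kv) (RatFunc Kv) (f.denom.comp (Polynomial.C q * Polynomial.X))

/-- The `q`-difference operator `d_q f(x) = (f(qx) - f(x))/((q-1)x)`. -/
def qDeriv (q : Kv) (f : RatFunc Kv) : RatFunc Kv :=
  (ratSubst q f - f) / (RatFunc.C (q - 1) * RatFunc.X)

/-- The Gauss norm of a polynomial: the sup of the norms of its coefficients. -/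
def polyGaussNorm (P : Polynomial Kv) : ℝ := ⨆ i : ℕ, ‖P.coeff i‖

/-- The Gauss norm of a rational function. -/
def gaussNorm (f : RatFunc Kv) : ℝ := polyGaussNorm f.num / polyGaussNorm f.denom

/-- The Gauss norm of a matrix of rational functions: max of the Gauss norms of the entries. -/
def matGaussNorm {μ : ℕ} (M : Matrix (Fin μ) (Fin μ) (RatFunc Kv)) : ℝ :=
  ⨆ i, ⨆ j, gaussNorm (M i j)

/-- The sequence of matrices `G_n`: `G_0 = 1`, `G_{n+1}(x) = G(x)·G_n(qx) + (d_q G_n)(x)`. -/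
def Gseq {μ : ℕ} (q : Kv) (G : Matrix (Fin μ) (Fin μ) (RatFunc Kv)) :
    ℕ → Matrix (Fin μ) (Fin μ) (RatFunc Kv)
  | 0 => 1
  | n + 1 => G * (Gseq q G n).map (ratSubst q) + (Gseq q G n).map (qDeriv q)

/-- `χ_v = min(1, liminf |G_n/[n]_q!|^{-1/n})`, computed in `ℝ≥0∞`. -/
def chiV {μ : ℕ} (q : Kv) (G : Matrix (Fin μ) (Fin μ) (RatFunc Kv)) : ℝ≥0∞ :=
  min 1 (Filter.liminf (fun n : ℕ =>
    (ENNReal.ofReal (matGaussNorm (Gseq q G n) / ‖qFactorial q n‖)) ^ (-(1 / (n : ℝ))))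
    Filter.atTop)

/-! Weight the `i`-th coordinate by `R ^ i`, where `R` is the spectral value of the polynomial
`X ^ μ - ∑ a_i X ^ i`. Since `x ↦ qx` preserves the Gauss norm and `d_q` does not increase it, the
operator `v ↦ G v(qx) + d_q v` multiplies weighted norms by at most `R`, and up to terms of weighted
norm smaller by a factor `R > 1` it acts as `G`. If `i₀` is the least index with
`|a_{i₀}| R ^ i₀ = R ^ μ`, then the reduction of the rescaled polynomial is `X ^ i₀` times a
polynomial with nonzero constant term; on the vectors whose reduction is divisible by `X ^ i₀`
multiplication by `X` is injective, so the last basis vector grows exactly like `R ^ n`. Hence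
`|G_n| ^ (1 / n) → R`, while `‖[n]_q!‖ = ‖n!‖` and Legendre's formula give
`‖[n]_q!‖ ^ (1 / n) → |p| ^ (1 / (p - 1))`. -/

open scoped Polynomial Matrix Topology

/-! ### The Gauss norm on rational functions -/

section GaussNorm

lemma polyGaussNorm_eq_supNorm (P : Kv[X]) : polyGaussNorm P = P.supNorm :=
  P.supNorm_eq_iSup.symm

lemma supNorm_pos {P : Kv[X]} (hP : P ≠ 0) : 0 < P.supNorm :=
  P.supNorm_nonneg.lt_of_ne' (P.supNorm_eq_zero_iff.not.mpr hP)

lemma supNorm_le {P : Kv[X]} {B : ℝ} (h : ∀ i, ‖P.coeff i‖ ≤ B) : P.supNorm ≤ B := by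
  obtain ⟨i, hi⟩ := P.exists_eq_supNorm
  exact hi ▸ h i

lemma gaussNorm_eq_div (f : RatFunc Kv) : gaussNorm f = f.num.supNorm / f.denom.supNorm := by
  simp only [gaussNorm, polyGaussNorm_eq_supNorm]

lemma gaussNorm_nonneg (f : RatFunc Kv) : 0 ≤ gaussNorm f := by
  rw [gaussNorm_eq_div]
  exact div_nonneg (Polynomial.supNorm_nonneg _) (Polynomial.supNorm_nonneg _)

variable [IsUltrametricDist Kv]

lemma supNorm_mul (P Q : Kv[X]) : (P * Q).supNorm = P.supNorm * Q.supNorm :=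
  Polynomial.gaussNorm_mul (v := NormedField.toAbsoluteValue Kv)
    IsUltrametricDist.isNonarchimedean_norm one_pos P Q

lemma isNonarchimedean_supNorm : IsNonarchimedean (Polynomial.supNorm : Kv[X] → ℝ) :=
  Polynomial.isNonarchimedean_gaussNorm (NormedField.toAbsoluteValue Kv)
    IsUltrametricDist.isNonarchimedean_norm zero_le_one

lemma gaussNorm_algebraMap_div (P : Kv[X]) {Q : Kv[X]} (hQ : Q ≠ 0) :
    gaussNorm (algebraMap Kv[X] (RatFunc Kv) P / algebraMap Kv[X] (RatFunc Kv) Q) =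
      P.supNorm / Q.supNorm := by
  set f := algebraMap Kv[X] (RatFunc Kv) P / algebraMap Kv[X] (RatFunc Kv) Q with hf
  have cross : f.num * Q = P * f.denom := (RatFunc.num_mul_eq_mul_denom_iff hQ).2 hf
  rw [gaussNorm_eq_div, div_eq_div_iff (supNorm_pos f.denom_ne_zero).ne' (supNorm_pos hQ).ne',
    ← supNorm_mul, ← supNorm_mul, cross]

lemma gaussNorm_algebraMap (P : Kv[X]) :
    gaussNorm (algebraMap Kv[X] (RatFunc Kv) P) = P.supNorm := by
  rw [← div_one (algebraMap _ _ P), ← map_one (algebraMap Kv[X] (RatFunc Kv)),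
    gaussNorm_algebraMap_div P one_ne_zero, ← Polynomial.C_1, Polynomial.supNorm_C, norm_one,
    div_one]

lemma gaussNorm_mul (f g : RatFunc Kv) : gaussNorm (f * g) = gaussNorm f * gaussNorm g := by
  conv_lhs => rw [← f.num_div_denom, ← g.num_div_denom, div_mul_div_comm, ← map_mul, ← map_mul]
  rw [gaussNorm_algebraMap_div _ (mul_ne_zero f.denom_ne_zero g.denom_ne_zero), supNorm_mul,
    supNorm_mul, gaussNorm_eq_div, gaussNorm_eq_div, div_mul_div_comm]

lemma isNonarchimedean_gaussNorm : IsNonarchimedean (gaussNorm : RatFunc Kv → ℝ) := by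
  intro f g
  have hden : f.denom * g.denom ≠ 0 := mul_ne_zero f.denom_ne_zero g.denom_ne_zero
  have hf : f = algebraMap _ _ (f.num * g.denom) / algebraMap _ _ (f.denom * g.denom) := by
    rw [map_mul, map_mul, mul_div_mul_right _ _ (RatFunc.algebraMap_ne_zero g.denom_ne_zero),
      f.num_div_denom]
  have hg : g = algebraMap _ _ (f.denom * g.num) / algebraMap _ _ (f.denom * g.denom) := by
    rw [map_mul, map_mul, mul_div_mul_left _ _ (RatFunc.algebraMap_ne_zero f.denom_ne_zero),
      g.num_div_denom]
  generalize f.num * g.denom = P at hf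
  generalize f.denom * g.num = Q at hg
  generalize f.denom * g.denom = D at hden hf hg
  rw [hf, hg, ← add_div, ← map_add, gaussNorm_algebraMap_div _ hden,
    gaussNorm_algebraMap_div _ hden, gaussNorm_algebraMap_div _ hden,
    max_div_div_right (Polynomial.supNorm_nonneg _)]
  gcongr
  · exact Polynomial.supNorm_nonneg _
  · exact isNonarchimedean_supNorm P Q

variable (Kv) in
/-- The Gauss norm, bundled as an absolute value on `Kv(x)`. -/
def gaussAbs : AbsoluteValue (RatFunc Kv) ℝ where
  toFun := gaussNorm
  map_mul' := gaussNorm_mul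
  nonneg' := gaussNorm_nonneg
  eq_zero' f := by
    rw [gaussNorm_eq_div, div_eq_zero_iff, Polynomial.supNorm_eq_zero_iff,
      Polynomial.supNorm_eq_zero_iff, RatFunc.num_eq_zero_iff, or_iff_left f.denom_ne_zero]
  add_le' f g := IsNonarchimedean.add_le gaussNorm_nonneg isNonarchimedean_gaussNorm

lemma gaussAbs_apply (f : RatFunc Kv) : gaussAbs Kv f = gaussNorm f := rfl

lemma gaussAbs_algebraMap (P : Kv[X]) : gaussAbs Kv (algebraMap _ _ P) = P.supNorm :=
  gaussNorm_algebraMap P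

end GaussNorm

/-! ### Substitution and the `q`-derivative -/

section QDerivative

lemma supNorm_comp_C_mul_X {q : Kv} (hq : ‖q‖ = 1) (P : Kv[X]) :
    (P.comp (.C q * .X)).supNorm = P.supNorm := by
  simp only [Polynomial.supNorm_eq_iSup, Polynomial.comp_C_mul_X_coeff, norm_mul, norm_pow, hq,
    one_pow, mul_one]

lemma comp_C_mul_X_ne_zero {q : Kv} (hq : q ≠ 0) {P : Kv[X]} (hP : P ≠ 0) :
    P.comp (.C q * .X) ≠ 0 := by
  refine fun h => hP (Polynomial.ext fun i => ?_)
  have hi := Polynomial.comp_C_mul_X_coeff (p := P) (r := q) (n := i)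
  rwa [h, Polynomial.coeff_zero, eq_comm, mul_eq_zero, or_iff_left (pow_ne_zero i hq)] at hi

variable [IsUltrametricDist Kv]

lemma norm_eq_one_of_norm_sub_one_lt {q : Kv} (h : ‖q - 1‖ < 1) :
    ‖q‖ = 1 := by
  rw [← add_sub_cancel 1 q, IsUltrametricDist.norm_add_eq_max_of_norm_ne_norm] <;> rw [norm_one]
  · exact max_eq_left h.le
  · exact h.ne'

lemma norm_pow_sub_one_le {q : Kv} (hq : ‖q‖ ≤ 1) (n : ℕ) : ‖q ^ n - 1‖ ≤ ‖q - 1‖ := by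
  have hsum : ‖∑ i ∈ Finset.range n, q ^ i‖ ≤ 1 :=
    IsUltrametricDist.norm_sum_le_of_forall_le_of_nonneg zero_le_one fun i _ =>
      (norm_pow q i).trans_le (pow_le_one₀ (norm_nonneg q) hq)
  rw [← geom_sum_mul, norm_mul]
  exact mul_le_of_le_one_left (norm_nonneg _) hsum

lemma supNorm_comp_C_mul_X_sub_le {q : Kv} (hq : ‖q‖ ≤ 1) (P : Kv[X]) :
    (P.comp (.C q * .X) - P).supNorm ≤ ‖q - 1‖ * P.supNorm := by
  refine supNorm_le fun i => ?_
  rw [Polynomial.coeff_sub, Polynomial.comp_C_mul_X_coeff, ← mul_sub_one, norm_mul, mul_comm]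
  gcongr
  · exact norm_pow_sub_one_le hq i
  · exact P.le_supNorm i

lemma gaussNorm_ratSubst {q : Kv} (hq : ‖q‖ = 1) (f : RatFunc Kv) :
    gaussNorm (ratSubst q f) = gaussNorm f := by
  have hq0 : q ≠ 0 := norm_ne_zero_iff.mp (hq ▸ one_ne_zero)
  rw [ratSubst, gaussNorm_algebraMap_div _ (comp_C_mul_X_ne_zero hq0 f.denom_ne_zero),
    supNorm_comp_C_mul_X hq, supNorm_comp_C_mul_X hq, gaussNorm_eq_div]

lemma gaussNorm_ratSubst_sub_le {q : Kv} (hq : ‖q‖ = 1) (f : RatFunc Kv) :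
    gaussNorm (ratSubst q f - f) ≤ ‖q - 1‖ * gaussNorm f := by
  have hq0 : q ≠ 0 := norm_ne_zero_iff.mp (hq ▸ one_ne_zero)
  have hden := supNorm_pos f.denom_ne_zero
  set P' := f.num.comp (.C q * .X)
  set Q' := f.denom.comp (.C q * .X)
  have hQ'0 : algebraMap Kv[X] (RatFunc Kv) Q' ≠ 0 :=
    RatFunc.algebraMap_ne_zero (comp_C_mul_X_ne_zero hq0 f.denom_ne_zero)
  have hf : f * algebraMap _ _ f.denom = algebraMap _ _ f.num :=
    (eq_div_iff (RatFunc.algebraMap_ne_zero f.denom_ne_zero)).mp f.num_div_denom.symm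
  have hsub : ratSubst q f - f =
      (algebraMap _ _ (P' - f.num) - f * algebraMap _ _ (Q' - f.denom)) / algebraMap _ _ Q' := by
    rw [eq_div_iff hQ'0, sub_mul, ratSubst, div_mul_cancel₀ _ hQ'0, map_sub, map_sub, mul_sub, hf]
    ring
  have hnum : f.num.supNorm = gaussNorm f * f.denom.supNorm := by
    rw [gaussNorm_eq_div, div_mul_cancel₀ _ hden.ne']
  have hP : gaussAbs Kv (algebraMap _ _ (P' - f.num)) ≤
      ‖q - 1‖ * gaussNorm f * f.denom.supNorm := by
    rw [gaussAbs_algebraMap, mul_assoc, ← hnum]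
    exact supNorm_comp_C_mul_X_sub_le hq.le _
  have hQ : gaussAbs Kv (f * algebraMap _ _ (Q' - f.denom)) ≤
      ‖q - 1‖ * gaussNorm f * f.denom.supNorm := by
    rw [map_mul, gaussAbs_algebraMap, gaussAbs_apply, mul_comm ‖q - 1‖, mul_assoc]
    exact mul_le_mul_of_nonneg_left (supNorm_comp_C_mul_X_sub_le hq.le _) (gaussNorm_nonneg f)
  rw [hsub, ← gaussAbs_apply, map_div₀, gaussAbs_algebraMap, supNorm_comp_C_mul_X hq,
    div_le_iff₀ hden, sub_eq_add_neg]
  refine (isNonarchimedean_gaussNorm _ _).trans (max_le hP ?_)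
  rwa [← gaussAbs_apply, AbsoluteValue.map_neg]

lemma gaussNorm_qDeriv_le {q : Kv} (hq : ‖q‖ = 1) (hq1 : q ≠ 1) (f : RatFunc Kv) :
    gaussNorm (qDeriv q f) ≤ gaussNorm f := by
  have hx : gaussAbs Kv (RatFunc.C (q - 1) * RatFunc.X) = ‖q - 1‖ := by
    rw [← RatFunc.algebraMap_C, ← RatFunc.algebraMap_X, map_mul, gaussAbs_algebraMap,
      gaussAbs_algebraMap, Polynomial.supNorm_C, Polynomial.supNorm_X, mul_one]
  rw [← gaussAbs_apply, qDeriv, map_div₀, hx,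
    div_le_iff₀ (norm_pos_iff.mpr (sub_ne_zero.mpr hq1)), mul_comm]
  exact gaussNorm_ratSubst_sub_le hq f

end QDerivative

/-! ### Semilinear dynamics of a companion matrix -/

/-- The companion matrix of `X ^ μ - ∑ a_i X ^ i`, with the coefficients `a_i` in the last column:
the matrix of an operator in a cyclic basis. -/
def companionMatrix {R : Type*} [Zero R] [One R] {μ : ℕ} (a : Fin μ → R) :
    Matrix (Fin μ) (Fin μ) R :=
  .of fun i j => if (j : ℕ) = μ - 1 then a i else if (i : ℕ) = j + 1 then 1 else 0

/-- The operator `x ↦ G σ(x) + δ(x)` on column vectors, with `σ` and `δ` applied entrywise; for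
`σ : f(x) ↦ f(qx)` and `δ = d_q` its iterates produce the columns of the matrices `G_n`. -/
def twistedStep {ι R : Type*} [Fintype ι] [NonUnitalNonAssocSemiring R] (G : Matrix ι ι R)
    (σ δ : R → R) (x : ι → R) : ι → R :=
  G *ᵥ (σ ∘ x) + δ ∘ x

section CompanionStep

variable {F : Type*} [Semiring F] {m : ℕ} (a : Fin (m + 1) → F) (σ δ : F → F) (x : Fin (m + 1) → F)

lemma twistedStep_companionMatrix_zero :
    twistedStep (companionMatrix a) σ δ x 0 = a 0 * σ (x (Fin.last m)) + δ (x 0) := by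
  have hcol (j : Fin m) : (j : ℕ) ≠ m := j.isLt.ne
  simp [twistedStep, companionMatrix, Matrix.mulVec, dotProduct, Fin.sum_univ_castSucc, hcol]

lemma twistedStep_companionMatrix_succ (k : Fin m) :
    twistedStep (companionMatrix a) σ δ x k.succ =
      σ (x k.castSucc) + (a k.succ * σ (x (Fin.last m)) + δ (x k.succ)) := by
  have hcol (j : Fin m) : (j : ℕ) ≠ m := j.isLt.ne
  simp [twistedStep, companionMatrix, Matrix.mulVec, dotProduct, Fin.sum_univ_castSucc, hcol,
    Fin.val_inj, add_assoc]

end CompanionStep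

section Ultrametric

variable {F : Type*} [Ring F] {v : AbsoluteValue F ℝ} {y z : F} {c D : ℝ}

lemma abs_add_mul_le (hv : IsNonarchimedean v) (hc : 0 ≤ c) (hy : v y * c ≤ D) (hz : v z * c ≤ D) :
    v (y + z) * c ≤ D :=
  (mul_le_mul_of_nonneg_right (hv y z) hc).trans <| by
    rw [max_mul_of_nonneg _ _ hc]
    exact max_le hy hz

lemma abs_add_mul_lt (hv : IsNonarchimedean v) (hc : 0 ≤ c) (hy : v y * c < D) (hz : v z * c < D) :
    v (y + z) * c < D :=
  (mul_le_mul_of_nonneg_right (hv y z) hc).trans_lt <| by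
    rw [max_mul_of_nonneg _ _ hc]
    exact max_lt hy hz

lemma abs_add_mul_eq (hv : IsNonarchimedean v) (hc : 0 ≤ c) (hy : v y * c = D) (hz : v z * c < D) :
    v (y + z) * c = D := by
  rw [hv.add_eq_left_of_lt (lt_of_mul_lt_mul_right (hz.trans_eq hy.symm) hc), hy]

end Ultrametric

/-- The weighted size `|x_i| R ^ i` of the `i`-th coordinate of a vector. -/
def weightedSize {F : Type*} [Semiring F] {n : ℕ} (v : AbsoluteValue F ℝ) (R : ℝ) (x : Fin n → F)
    (i : Fin n) : ℝ :=
  v (x i) * R ^ (i : ℕ)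

/-- `x` has maximal weighted size `B`, attained only at indices `≥ i₀`. In terms of polynomials, the
reduction of `∑ x_i X ^ i` after rescaling is nonzero and divisible by `X ^ i₀`. -/
structure HasPeakFrom {F : Type*} [Semiring F] {n : ℕ} (v : AbsoluteValue F ℝ) (R : ℝ) (i₀ : Fin n)
    (x : Fin n → F) (B : ℝ) : Prop where
  le : ∀ i, weightedSize v R x i ≤ B
  lt_of_lt : ∀ i < i₀, weightedSize v R x i < B
  exists_eq : ∃ i, weightedSize v R x i = B

/-- The compatibility of a pair of operators `σ`, `δ` with an absolute value that the substitution
`x ↦ qx` and the `q`-derivative enjoy: `σ` preserves it and `δ` does not increase it. -/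
structure IsIsometricTwist {F : Type*} [Semiring F] (v : AbsoluteValue F ℝ) (σ δ : F → F) :
    Prop where
  map_eq : ∀ x, v (σ x) = v x
  map_le : ∀ x, v (δ x) ≤ v x

section CompanionDynamics

variable {F : Type*} [Ring F] {v : AbsoluteValue F ℝ} {σ δ : F → F} {m : ℕ}
  {a x : Fin (m + 1) → F} {R B : ℝ} {i i₀ : Fin (m + 1)}

lemma weightedSize_nonneg (hR : 0 ≤ R) : 0 ≤ weightedSize v R x i :=
  mul_nonneg (v.nonneg _) (pow_nonneg hR _)

lemma abs_sigma_castSucc_mul_pow (hT : IsIsometricTwist v σ δ) (k : Fin m) :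
    v (σ (x k.castSucc)) * R ^ (k.succ : ℕ) = R * weightedSize v R x k.castSucc := by
  rw [hT.map_eq, weightedSize, Fin.val_succ, Fin.val_castSucc, pow_succ]
  ring

lemma abs_lastColumn_mul_pow (hT : IsIsometricTwist v σ δ) (hR : 0 < R) :
    v (a i * σ (x (Fin.last m))) * R ^ (i : ℕ) =
      weightedSize v R a i / R ^ m * weightedSize v R x (Fin.last m) := by
  rw [map_mul, hT.map_eq, weightedSize, weightedSize, Fin.val_last]
  field_simp

lemma abs_lastColumn_mul_pow_le (hT : IsIsometricTwist v σ δ) (hR : 0 < R)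
    (ha : weightedSize v R a i ≤ R ^ (m + 1)) :
    v (a i * σ (x (Fin.last m))) * R ^ (i : ℕ) ≤ R * weightedSize v R x (Fin.last m) := by
  rw [abs_lastColumn_mul_pow hT hR]
  refine mul_le_mul_of_nonneg_right ?_ (weightedSize_nonneg hR.le)
  rwa [div_le_iff₀' (by positivity), ← pow_succ]

variable (hv : IsNonarchimedean v) (hT : IsIsometricTwist v σ δ) (hR : 1 < R) (hB : 0 < B)

include hT hR hB in
lemma abs_delta_mul_pow_lt (hx : weightedSize v R x i ≤ B) :
    v (δ (x i)) * R ^ (i : ℕ) < R * B :=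
  calc v (δ (x i)) * R ^ (i : ℕ) ≤ weightedSize v R x i :=
        mul_le_mul_of_nonneg_right (hT.map_le _) (by positivity)
    _ ≤ B := hx
    _ < R * B := lt_mul_of_one_lt_left hB hR

include hv hT hR hB

lemma abs_lastColumn_add_delta_mul_pow_le (ha : weightedSize v R a i ≤ R ^ (m + 1))
    (hx : ∀ j, weightedSize v R x j ≤ B) :
    v (a i * σ (x (Fin.last m)) + δ (x i)) * R ^ (i : ℕ) ≤ R * B := by
  have hR₀ : 0 < R := one_pos.trans hR
  refine abs_add_mul_le hv (by positivity) ?_ (abs_delta_mul_pow_lt hT hR hB (hx i)).le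
  exact (abs_lastColumn_mul_pow_le hT hR₀ ha).trans (mul_le_mul_of_nonneg_left (hx _) hR₀.le)

lemma abs_lastColumn_add_delta_mul_pow_lt_of_coeff_lt (ha : weightedSize v R a i < R ^ (m + 1))
    (hx : ∀ j, weightedSize v R x j ≤ B) :
    v (a i * σ (x (Fin.last m)) + δ (x i)) * R ^ (i : ℕ) < R * B := by
  have hR₀ : 0 < R := one_pos.trans hR
  refine abs_add_mul_lt hv (by positivity) ?_ (abs_delta_mul_pow_lt hT hR hB (hx i))
  calc v (a i * σ (x (Fin.last m))) * R ^ (i : ℕ)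
      = weightedSize v R a i / R ^ m * weightedSize v R x (Fin.last m) :=
        abs_lastColumn_mul_pow hT hR₀
    _ ≤ weightedSize v R a i / R ^ m * B :=
        mul_le_mul_of_nonneg_left (hx _) (div_nonneg (weightedSize_nonneg hR₀.le) (by positivity))
    _ < R * B := mul_lt_mul_of_pos_right (by rwa [div_lt_iff₀' (by positivity), ← pow_succ]) hB

lemma abs_lastColumn_add_delta_mul_pow_lt_of_last_lt (ha : weightedSize v R a i ≤ R ^ (m + 1))
    (hx : weightedSize v R x i ≤ B) (hlast : weightedSize v R x (Fin.last m) < B) :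
    v (a i * σ (x (Fin.last m)) + δ (x i)) * R ^ (i : ℕ) < R * B := by
  have hR₀ : 0 < R := one_pos.trans hR
  refine abs_add_mul_lt hv (by positivity) ?_ (abs_delta_mul_pow_lt hT hR hB hx)
  exact (abs_lastColumn_mul_pow_le hT hR₀ ha).trans_lt (mul_lt_mul_of_pos_left hlast hR₀)

lemma abs_lastColumn_add_delta_mul_pow_eq (ha : weightedSize v R a i = R ^ (m + 1))
    (hx : weightedSize v R x i ≤ B) (hlast : weightedSize v R x (Fin.last m) = B) :
    v (a i * σ (x (Fin.last m)) + δ (x i)) * R ^ (i : ℕ) = R * B := by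
  have hR₀ : 0 < R := one_pos.trans hR
  refine abs_add_mul_eq hv (by positivity) ?_ (abs_delta_mul_pow_lt hT hR hB hx)
  rw [abs_lastColumn_mul_pow hT hR₀, ha, hlast, pow_succ, mul_div_cancel_left₀ _ (by positivity)]

lemma weightedSize_twistedStep_le (ha : ∀ i, weightedSize v R a i ≤ R ^ (m + 1))
    (hx : ∀ i, weightedSize v R x i ≤ B) (i : Fin (m + 1)) :
    weightedSize v R (twistedStep (companionMatrix a) σ δ x) i ≤ R * B := by
  have hR₀ : 0 < R := one_pos.trans hR
  have hrem (i) := abs_lastColumn_add_delta_mul_pow_le hv hT hR hB (ha i) hx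
  cases i using Fin.cases with
  | zero =>
    rw [weightedSize, twistedStep_companionMatrix_zero]
    exact hrem 0
  | succ k =>
    rw [weightedSize, twistedStep_companionMatrix_succ]
    refine abs_add_mul_le hv (by positivity) ?_ (hrem k.succ)
    rw [abs_sigma_castSucc_mul_pow hT]
    exact mul_le_mul_of_nonneg_left (hx _) hR₀.le

lemma weightedSize_twistedStep_lt (ha : weightedSize v R a i < R ^ (m + 1))
    (hx : HasPeakFrom v R i₀ x B) (hi : i ≤ i₀) :
    weightedSize v R (twistedStep (companionMatrix a) σ δ x) i < R * B := by
  have hR₀ : 0 < R := one_pos.trans hR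
  have hrem := abs_lastColumn_add_delta_mul_pow_lt_of_coeff_lt hv hT hR hB ha hx.le
  cases i using Fin.cases with
  | zero => rwa [weightedSize, twistedStep_companionMatrix_zero]
  | succ k =>
    rw [weightedSize, twistedStep_companionMatrix_succ]
    refine abs_add_mul_lt hv (by positivity) ?_ hrem
    rw [abs_sigma_castSucc_mul_pow hT]
    exact mul_lt_mul_of_pos_left (hx.lt_of_lt _ (k.castSucc_lt_succ.trans_le hi)) hR₀

lemma weightedSize_twistedStep_eq_of_last_eq (ha : weightedSize v R a i₀ = R ^ (m + 1))
    (hx : HasPeakFrom v R i₀ x B) (hlast : weightedSize v R x (Fin.last m) = B) :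
    weightedSize v R (twistedStep (companionMatrix a) σ δ x) i₀ = R * B := by
  have hR₀ : 0 < R := one_pos.trans hR
  have hrem := abs_lastColumn_add_delta_mul_pow_eq hv hT hR hB ha (hx.le i₀) hlast
  cases i₀ using Fin.cases with
  | zero => rwa [weightedSize, twistedStep_companionMatrix_zero]
  | succ k =>
    rw [weightedSize, twistedStep_companionMatrix_succ, add_comm]
    refine abs_add_mul_eq hv (by positivity) hrem ?_
    rw [abs_sigma_castSucc_mul_pow hT]
    exact mul_lt_mul_of_pos_left (hx.lt_of_lt _ k.castSucc_lt_succ) hR₀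

lemma weightedSize_twistedStep_succ_eq_of_last_lt {k : Fin m}
    (ha : weightedSize v R a k.succ ≤ R ^ (m + 1)) (hx : weightedSize v R x k.succ ≤ B)
    (hlast : weightedSize v R x (Fin.last m) < B) (hk : weightedSize v R x k.castSucc = B) :
    weightedSize v R (twistedStep (companionMatrix a) σ δ x) k.succ = R * B := by
  rw [weightedSize, twistedStep_companionMatrix_succ]
  refine abs_add_mul_eq hv (pow_nonneg (one_pos.trans hR).le _) ?_
    (abs_lastColumn_add_delta_mul_pow_lt_of_last_lt hv hT hR hB ha hx hlast)
  rw [abs_sigma_castSucc_mul_pow hT, hk]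

lemma hasPeakFrom_twistedStep (ha : ∀ i, weightedSize v R a i ≤ R ^ (m + 1))
    (hmin : ∀ i < i₀, weightedSize v R a i < R ^ (m + 1))
    (hi₀ : weightedSize v R a i₀ = R ^ (m + 1))
    (hx : HasPeakFrom v R i₀ x B) :
    HasPeakFrom v R i₀ (twistedStep (companionMatrix a) σ δ x) (R * B) where
  le := weightedSize_twistedStep_le hv hT hR hB ha hx.le
  lt_of_lt i hi := weightedSize_twistedStep_lt hv hT hR hB (hmin i hi) hx hi.le
  exists_eq := by
    rcases (hx.le (Fin.last m)).eq_or_lt with hlast | hlast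
    · exact ⟨i₀, weightedSize_twistedStep_eq_of_last_eq hv hT hR hB hi₀ hx hlast⟩
    · obtain ⟨k, hk⟩ := hx.exists_eq
      cases k using Fin.lastCases with
      | last => exact absurd hk hlast.ne
      | cast k => exact ⟨k.succ, weightedSize_twistedStep_succ_eq_of_last_lt hv hT hR hB (ha _)
          (hx.le _) hlast hk⟩

lemma weightedSize_iterate_twistedStep_le (ha : ∀ i, weightedSize v R a i ≤ R ^ (m + 1))
    (hx : ∀ i, weightedSize v R x i ≤ B) (n : ℕ) :
    ∀ i, weightedSize v R ((twistedStep (companionMatrix a) σ δ)^[n] x) i ≤ R ^ n * B := by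
  induction n with
  | zero => simpa using hx
  | succ n ih =>
    have hRn : 0 < R ^ n := pow_pos (one_pos.trans hR) n
    rw [Function.iterate_succ_apply', pow_succ', mul_assoc]
    exact weightedSize_twistedStep_le hv hT hR (mul_pos hRn hB) ha ih

lemma hasPeakFrom_iterate_twistedStep (ha : ∀ i, weightedSize v R a i ≤ R ^ (m + 1))
    (hmin : ∀ i < i₀, weightedSize v R a i < R ^ (m + 1))
    (hi₀ : weightedSize v R a i₀ = R ^ (m + 1)) (hx : HasPeakFrom v R i₀ x B) (n : ℕ) :
    HasPeakFrom v R i₀ ((twistedStep (companionMatrix a) σ δ)^[n] x) (R ^ n * B) := by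
  induction n with
  | zero => simpa using hx
  | succ n ih =>
    have hRn : 0 < R ^ n := pow_pos (one_pos.trans hR) n
    rw [Function.iterate_succ_apply', pow_succ', mul_assoc]
    exact hasPeakFrom_twistedStep hv hT hR (mul_pos hRn hB) ha hmin hi₀ ih

end CompanionDynamics

section CompanionGrowth

variable {F : Type*} [Ring F] [Nontrivial F] {v : AbsoluteValue F ℝ} {σ δ : F → F} {m : ℕ}
  {a : Fin (m + 1) → F} {R : ℝ}

lemma weightedSize_single_le (hR : 1 ≤ R) (i j : Fin (m + 1)) :
    weightedSize v R (Pi.single j 1) i ≤ R ^ m := by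
  rcases eq_or_ne i j with rfl | hij
  · simpa [weightedSize] using pow_le_pow_right₀ hR i.is_le
  · simpa [weightedSize, hij] using pow_nonneg (zero_le_one.trans hR) m

lemma hasPeakFrom_single_last (hR : 1 ≤ R) (i₀ : Fin (m + 1)) :
    HasPeakFrom v R i₀ (Pi.single (Fin.last m) 1) (R ^ m) where
  le i := weightedSize_single_le hR i _
  lt_of_lt i hi := by
    simpa [weightedSize, (hi.trans_le (Fin.le_last i₀)).ne] using pow_pos (one_pos.trans_le hR) m
  exists_eq := ⟨Fin.last m, by simp [weightedSize]⟩

variable (hv : IsNonarchimedean v) (hT : IsIsometricTwist v σ δ) (hR : 1 < R)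
  (ha : ∀ i, weightedSize v R a i ≤ R ^ (m + 1))

include hv hT hR ha

lemma abs_iterate_twistedStep_le (n : ℕ) (i j : Fin (m + 1)) :
    v ((twistedStep (companionMatrix a) σ δ)^[n] (Pi.single j 1) i) ≤ R ^ m * R ^ n := by
  have hRm : 0 < R ^ m := pow_pos (one_pos.trans hR) m
  have hw := weightedSize_iterate_twistedStep_le hv hT hR hRm ha
    (fun i => weightedSize_single_le hR.le i j) n i
  rw [mul_comm]
  exact (le_mul_of_one_le_right (v.nonneg _) (one_le_pow₀ hR.le)).trans hw

lemma exists_le_abs_iterate_twistedStep (hattained : ∃ i, weightedSize v R a i = R ^ (m + 1))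
    (n : ℕ) :
    ∃ i, R ^ n ≤ v ((twistedStep (companionMatrix a) σ δ)^[n] (Pi.single (Fin.last m) 1) i) := by
  have hR₀ : 0 < R := one_pos.trans hR
  obtain ⟨i₀, hi₀, hleast⟩ := WellFounded.has_min (wellFounded_lt (α := Fin (m + 1)))
    {i | weightedSize v R a i = R ^ (m + 1)} hattained
  have hmin (i) (hi : i < i₀) : weightedSize v R a i < R ^ (m + 1) :=
    (ha i).lt_of_ne fun h => hleast i h hi
  obtain ⟨i, hi⟩ := (hasPeakFrom_iterate_twistedStep hv hT hR (pow_pos hR₀ m) ha hmin hi₀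
    (hasPeakFrom_single_last hR.le i₀) n).exists_eq
  refine ⟨i, le_of_mul_le_mul_right ?_ (pow_pos hR₀ m)⟩
  rw [← hi, weightedSize]
  exact mul_le_mul_of_nonneg_left (pow_le_pow_right₀ hR.le i.is_le) (v.nonneg _)

end CompanionGrowth

section Gseq

variable {q : Kv}

lemma Gseq_col {μ : ℕ} (G : Matrix (Fin μ) (Fin μ) (RatFunc Kv)) (n : ℕ) (j : Fin μ) :
    (Gseq q G n).col j = (twistedStep G (ratSubst q) (qDeriv q))^[n] (Pi.single j 1) := by
  induction n with
  | zero =>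
    ext i
    simp [Gseq, Matrix.one_apply, Pi.single_apply]
  | succ n ih =>
    rw [Function.iterate_succ_apply', ← ih]
    ext i
    simp [Gseq, twistedStep, Matrix.mul_apply, Matrix.mulVec, dotProduct]

lemma gaussNorm_le_matGaussNorm {μ : ℕ} (A : Matrix (Fin μ) (Fin μ) (RatFunc Kv)) (i j : Fin μ) :
    gaussNorm (A i j) ≤ matGaussNorm A :=
  (le_ciSup (f := fun j => gaussNorm (A i j)) (Set.finite_range _).bddAbove j).trans
    (le_ciSup (f := fun i => ⨆ j, gaussNorm (A i j)) (Set.finite_range _).bddAbove i)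

variable [IsUltrametricDist Kv]

lemma isIsometricTwist_ratSubst_qDeriv (hq : ‖q‖ = 1) (hq1 : q ≠ 1) :
    IsIsometricTwist (gaussAbs Kv) (ratSubst q) (qDeriv q) where
  map_eq := gaussNorm_ratSubst hq
  map_le := gaussNorm_qDeriv_le hq hq1

variable {m : ℕ} {a : Fin (m + 1) → RatFunc Kv} {R : ℝ}
  (hq : ‖q‖ = 1) (hq1 : q ≠ 1) (hR : 1 < R)
  (ha : ∀ i, gaussNorm (a i) * R ^ (i : ℕ) ≤ R ^ (m + 1))

include hq hq1 hR ha

lemma matGaussNorm_Gseq_companionMatrix_le (n : ℕ) :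
    matGaussNorm (Gseq q (companionMatrix a) n) ≤ R ^ m * R ^ n := by
  refine ciSup_le fun i => ciSup_le fun j => ?_
  rw [← Matrix.col_apply (Gseq q _ n), Gseq_col]
  exact abs_iterate_twistedStep_le isNonarchimedean_gaussNorm
    (isIsometricTwist_ratSubst_qDeriv hq hq1) hR ha n i j

lemma pow_le_matGaussNorm_Gseq_companionMatrix
    (hattained : ∃ i, gaussNorm (a i) * R ^ (i : ℕ) = R ^ (m + 1)) (n : ℕ) :
    R ^ n ≤ matGaussNorm (Gseq q (companionMatrix a) n) := by
  obtain ⟨i, hi⟩ := exists_le_abs_iterate_twistedStep isNonarchimedean_gaussNorm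
    (isIsometricTwist_ratSubst_qDeriv hq hq1) hR ha hattained n
  rw [← Gseq_col] at hi
  exact hi.trans (gaussNorm_le_matGaussNorm _ i (Fin.last m))

end Gseq

/-! ### The spectral value of a companion polynomial -/

section NewtonRadius

/-- The spectral value of `X ^ μ - ∑ a_i X ^ i` with `|a_i| = c_i`, i.e. the largest absolute value
of its roots; cf. `spectralValue`. -/
def newtonRadius {μ : ℕ} (c : Fin μ → ℝ) : ℝ := ⨆ i, c i ^ ((1 : ℝ) / ((μ : ℝ) - ((i : ℕ) : ℝ)))

variable {μ : ℕ} {c : Fin μ → ℝ}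

lemma rpow_one_div_sub_pow {y : ℝ} (hy : 0 ≤ y) (i : Fin μ) :
    (y ^ ((1 : ℝ) / ((μ : ℝ) - ((i : ℕ) : ℝ)))) ^ (μ - (i : ℕ)) = y := by
  rw [← Nat.cast_sub i.isLt.le, one_div,
    Real.rpow_inv_natCast_pow hy (Nat.sub_ne_zero_of_lt i.isLt)]

lemma rpow_le_newtonRadius (c : Fin μ → ℝ) (i : Fin μ) :
    c i ^ ((1 : ℝ) / ((μ : ℝ) - ((i : ℕ) : ℝ))) ≤ newtonRadius c :=
  le_ciSup (f := fun i : Fin μ => c i ^ ((1 : ℝ) / ((μ : ℝ) - ((i : ℕ) : ℝ))))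
    (Set.finite_range _).bddAbove i

lemma newtonRadius_nonneg (hc : ∀ i, 0 ≤ c i) : 0 ≤ newtonRadius c :=
  Real.iSup_nonneg fun i => Real.rpow_nonneg (hc i) _

lemma mul_newtonRadius_pow_le (hc : ∀ i, 0 ≤ c i) (i : Fin μ) :
    c i * newtonRadius c ^ (i : ℕ) ≤ newtonRadius c ^ μ := by
  rw [← pow_sub_mul_pow (newtonRadius c) i.isLt.le]
  refine mul_le_mul_of_nonneg_right ?_ (pow_nonneg (newtonRadius_nonneg hc) _)
  conv_lhs => rw [← rpow_one_div_sub_pow (hc i) i]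
  exact pow_le_pow_left₀ (Real.rpow_nonneg (hc i) _) (rpow_le_newtonRadius c i) _

lemma exists_mul_newtonRadius_pow_eq [Nonempty (Fin μ)] (hc : ∀ i, 0 ≤ c i) :
    ∃ i : Fin μ, c i * newtonRadius c ^ (i : ℕ) = newtonRadius c ^ μ := by
  obtain ⟨i, hi⟩ := exists_eq_ciSup_of_finite
    (f := fun i : Fin μ => c i ^ ((1 : ℝ) / ((μ : ℝ) - ((i : ℕ) : ℝ))))
  refine ⟨i, ?_⟩
  rw [← pow_sub_mul_pow (newtonRadius c) i.isLt.le]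
  conv_rhs => rw [newtonRadius, ← hi, rpow_one_div_sub_pow (hc i)]
  rw [newtonRadius, ← hi]

lemma one_lt_newtonRadius [Nonempty (Fin μ)] (h : 1 < ⨆ i, c i) : 1 < newtonRadius c := by
  obtain ⟨i, hi⟩ := exists_lt_of_lt_ciSup h
  have hexp : 0 < (1 : ℝ) / ((μ : ℝ) - ((i : ℕ) : ℝ)) :=
    one_div_pos.mpr (sub_pos.mpr (by exact_mod_cast i.isLt))
  exact (Real.one_lt_rpow hi hexp).trans_le (rpow_le_newtonRadius c i)

end NewtonRadius

/-! ### The norm of `q`-factorials -/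

section Valuation

variable [IsUltrametricDist Kv] {p : ℕ}

lemma norm_natCast_eq_one_of_coprime (hpv : ‖(p : Kv)‖ < 1) {m : ℕ} (hm : p.Coprime m) :
    ‖(m : Kv)‖ = 1 := by
  refine (IsUltrametricDist.norm_natCast_le_one Kv m).antisymm (le_of_not_gt fun hlt => ?_)
  obtain ⟨x, y, hxy⟩ := Nat.isCoprime_iff_coprime.mpr hm
  have hbezout : (x : Kv) * p + y * m = 1 := by exact_mod_cast congrArg (Int.cast : ℤ → Kv) hxy
  have hsmall (z : ℤ) {w : Kv} (hw : ‖w‖ < 1) : ‖z * w‖ < 1 := by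
    rw [norm_mul]
    exact (mul_le_of_le_one_left (norm_nonneg w)
      (IsUltrametricDist.norm_intCast_le_one Kv z)).trans_lt hw
  have hsum := (IsUltrametricDist.norm_add_le_max ((x : Kv) * p) (y * m)).trans_lt
    (max_lt (hsmall x hpv) (hsmall y hlt))
  rw [hbezout, norm_one] at hsum
  exact hsum.false

lemma norm_natCast_eq_pow_padicValNat (hp : p.Prime) (hpv : ‖(p : Kv)‖ < 1) {m : ℕ} (hm : m ≠ 0) :
    ‖(m : Kv)‖ = ‖(p : Kv)‖ ^ padicValNat p m := by
  obtain ⟨k, n, hn, rfl⟩ := Nat.exists_eq_pow_mul_and_not_dvd hm p hp.ne_one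
  have := Fact.mk hp
  have hn₀ : n ≠ 0 := fun h => hn (h ▸ dvd_zero p)
  rw [padicValNat.mul (pow_ne_zero _ hp.ne_zero) hn₀, padicValNat.prime_pow,
    padicValNat.eq_zero_of_not_dvd hn, add_zero, Nat.cast_mul, Nat.cast_pow, norm_mul, norm_pow,
    norm_natCast_eq_one_of_coprime hpv (hp.coprime_iff_not_dvd.mpr hn), mul_one]

variable (hp : p.Prime) (hpv : ‖(p : Kv)‖ < 1) {q : Kv}
  (hdw : ‖q - 1‖ < ‖(p : Kv)‖ ^ ((1 : ℝ) / ((p : ℝ) - 1)))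

include hp

omit [IsUltrametricDist Kv] in
lemma prime_sub_one_pos : (0 : ℝ) < (p : ℝ) - 1 :=
  sub_pos.mpr (by exact_mod_cast hp.one_lt)

include hdw

omit [IsUltrametricDist Kv] in
lemma norm_prime_pos : 0 < ‖(p : Kv)‖ := by
  refine (norm_nonneg _).lt_of_ne fun h => (norm_nonneg (q - 1)).not_gt ?_
  rwa [← h, Real.zero_rpow (one_div_pos.mpr (prime_sub_one_pos hp)).ne'] at hdw

include hpv

lemma norm_sub_one_pow_lt {k : ℕ} (hk : k ≠ 0) : ‖q - 1‖ ^ k < ‖((k + 1 : ℕ) : Kv)‖ := by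
  have hp₀ := norm_prime_pos hp hdw
  rw [norm_natCast_eq_pow_padicValNat hp hpv k.succ_ne_zero]
  set e := padicValNat p (k + 1)
  have hbernoulli : 1 + e * ((p : ℝ) - 1) ≤ (p : ℝ) ^ e := by
    simpa using one_add_mul_le_pow (a := (p : ℝ) - 1) (by linarith [prime_sub_one_pos hp]) e
  have hdvd : (p : ℝ) ^ e ≤ k + 1 := by
    exact_mod_cast Nat.le_of_dvd k.succ_pos (pow_padicValNat_dvd (p := p))
  calc ‖q - 1‖ ^ k < (‖(p : Kv)‖ ^ ((1 : ℝ) / ((p : ℝ) - 1))) ^ k :=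
        pow_lt_pow_left₀ hdw (norm_nonneg _) hk
    _ = ‖(p : Kv)‖ ^ ((k : ℝ) / ((p : ℝ) - 1)) := by
        rw [← Real.rpow_mul_natCast hp₀.le, one_div_mul_eq_div]
    _ ≤ ‖(p : Kv)‖ ^ (e : ℝ) := by
        refine Real.rpow_le_rpow_of_exponent_ge hp₀ hpv.le ?_
        rw [le_div_iff₀ (prime_sub_one_pos hp)]
        linarith
    _ = ‖(p : Kv)‖ ^ e := Real.rpow_natCast _ _

omit hp hpv hdw [IsUltrametricDist Kv] in
lemma qNat_eq_sum_choose (q : Kv) (m : ℕ) :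
    qNat q m = ∑ k ∈ Finset.range m, (m.choose (k + 1) : Kv) * (q - 1) ^ k := by
  have h := congrArg (Polynomial.eval (q - 1))
    (Polynomial.geom_sum_X_comp_X_add_one_eq_sum (R := Kv) m)
  simpa [qNat, Polynomial.eval_finsetSum, Polynomial.eval_geom_sum] using h

lemma norm_natCast_pos {m : ℕ} (hm : m ≠ 0) : 0 < ‖(m : Kv)‖ := by
  rw [norm_natCast_eq_pow_padicValNat hp hpv hm]
  exact pow_pos (norm_prime_pos hp hdw) _

lemma norm_choose_mul_pow_lt {m k : ℕ} (hk : k ≠ 0) :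
    ‖((m + 1).choose (k + 1) : Kv) * (q - 1) ^ k‖ < ‖((m + 1 : ℕ) : Kv)‖ := by
  rw [norm_mul, norm_pow]
  rcases (norm_nonneg ((m + 1).choose (k + 1) : Kv)).eq_or_lt with h₀ | hpos
  · rw [← h₀, zero_mul]
    exact norm_natCast_pos hp hpv hdw m.succ_ne_zero
  · calc ‖((m + 1).choose (k + 1) : Kv)‖ * ‖q - 1‖ ^ k
        < ‖((m + 1).choose (k + 1) : Kv)‖ * ‖((k + 1 : ℕ) : Kv)‖ :=
          mul_lt_mul_of_pos_left (norm_sub_one_pow_lt hp hpv hdw hk) hpos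
      _ = ‖((m + 1 : ℕ) : Kv)‖ * ‖(m.choose k : Kv)‖ := by
          rw [← norm_mul, ← norm_mul, ← Nat.cast_mul, ← Nat.cast_mul, Nat.add_one_mul_choose_eq]
      _ ≤ ‖((m + 1 : ℕ) : Kv)‖ :=
          mul_le_of_le_one_right (norm_nonneg _) (IsUltrametricDist.norm_natCast_le_one Kv _)

lemma norm_qNat_succ (m : ℕ) : ‖qNat q (m + 1)‖ = ‖((m + 1 : ℕ) : Kv)‖ := by
  have hterm (k) (_ : k ∈ Finset.range (m + 1)) (hk : k ≠ 0) :
      ‖((m + 1).choose (k + 1) : Kv) * (q - 1) ^ k‖ <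
        ‖((m + 1).choose (0 + 1) : Kv) * (q - 1) ^ 0‖ := by
    simpa only [zero_add, Nat.choose_one_right, pow_zero, mul_one] using
      norm_choose_mul_pow_lt hp hpv hdw hk
  rw [qNat_eq_sum_choose, IsUltrametricDist.isNonarchimedean_norm.apply_sum_eq_of_lt
    (fun y => (norm_neg y).symm) (Finset.mem_range.mpr m.succ_pos) hterm]
  simp only [zero_add, Nat.choose_one_right, pow_zero, mul_one]

lemma norm_qFactorial (n : ℕ) : ‖qFactorial q n‖ = ‖(n.factorial : Kv)‖ := by
  induction n with
  | zero => simp [qFactorial]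
  | succ n ih =>
    rw [qFactorial, norm_mul, ih, norm_qNat_succ hp hpv hdw, Nat.factorial_succ, Nat.cast_mul,
      norm_mul, mul_comm]

lemma norm_qFactorial_pos (n : ℕ) : 0 < ‖qFactorial q n‖ := by
  rw [norm_qFactorial hp hpv hdw]
  exact norm_natCast_pos hp hpv hdw n.factorial_ne_zero

end Valuation

section Legendre

lemma tendsto_digits_sum_div {b : ℕ} (hb : 1 < b) :
    Tendsto (fun n : ℕ => ((b.digits n).sum : ℝ) / n) atTop (𝓝 0) := by
  have hlog : Tendsto (fun n : ℕ => Real.logb b n / n) atTop (𝓝 0) :=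
    (Real.isLittleO_logb_id_atTop (b := b)).tendsto_div_nhds_zero.comp tendsto_natCast_atTop_atTop
  have hbound : Tendsto (fun n : ℕ => (Real.logb b n / n + 1 / n) * b) atTop (𝓝 0) := by
    simpa using (hlog.add tendsto_one_div_atTop_nhds_zero_nat).mul_const (b : ℝ)
  refine squeeze_zero' (.of_forall fun n => by positivity) ?_ hbound
  filter_upwards [eventually_ne_atTop 0] with n hn
  have hdigits : (b.digits n).sum ≤ (Nat.log b n + 1) * b := by
    rw [← Nat.length_digits b n hb hn, ← smul_eq_mul]
    exact List.sum_le_card_nsmul _ _ fun d hd => (Nat.digits_lt_base hb hd).le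
  calc ((b.digits n).sum : ℝ) / n ≤ ((Nat.log b n + 1) * b) / n := by
        gcongr
        exact_mod_cast hdigits
    _ ≤ ((Real.logb b n + 1) * b) / n := by
        gcongr
        exact Real.natLog_le_logb n b
    _ = (Real.logb b n / n + 1 / n) * b := by ring

lemma tendsto_padicValNat_factorial_div {p : ℕ} (hp : p.Prime) :
    Tendsto (fun n : ℕ => (padicValNat p n.factorial : ℝ) / n) atTop (𝓝 (1 / ((p : ℝ) - 1))) := by
  have := Fact.mk hp
  have hlim := ((tendsto_digits_sum_div hp.one_lt).const_sub 1).div_const ((p : ℝ) - 1)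
  rw [sub_zero] at hlim
  refine hlim.congr' ?_
  filter_upwards [eventually_ne_atTop 0] with n hn
  have hlegendre : ((p : ℝ) - 1) * padicValNat p n.factorial = n - (p.digits n).sum := by
    rw [← Nat.cast_sub (Nat.digit_sum_le p n), ← sub_one_mul_padicValNat_factorial, Nat.cast_mul,
      Nat.cast_pred hp.pos]
  have hn' : (n : ℝ) ≠ 0 := Nat.cast_ne_zero.mpr hn
  rw [one_sub_div hn', ← hlegendre]
  field_simp [(prime_sub_one_pos hp).ne']

lemma tendsto_norm_qFactorial_rpow [IsUltrametricDist Kv] {p : ℕ} (hp : p.Prime)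
    (hpv : ‖(p : Kv)‖ < 1) {q : Kv}
    (hdw : ‖q - 1‖ < ‖(p : Kv)‖ ^ ((1 : ℝ) / ((p : ℝ) - 1))) :
    Tendsto (fun n : ℕ => ‖qFactorial q n‖ ^ (1 / (n : ℝ))) atTop
      (𝓝 (‖(p : Kv)‖ ^ ((1 : ℝ) / ((p : ℝ) - 1)))) := by
  have hp₀ := norm_prime_pos hp hdw
  refine (tendsto_const_nhds.rpow (tendsto_padicValNat_factorial_div hp) (.inl hp₀.ne')).congr
    fun n => ?_
  rw [norm_qFactorial hp hpv hdw, norm_natCast_eq_pow_padicValNat hp hpv n.factorial_ne_zero,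
    ← Real.rpow_natCast_mul hp₀.le, mul_one_div]

end Legendre

/-! ### The radius of convergence -/

section Limits

variable {u w : ℕ → ℝ} {r R : ℝ}

lemma tendsto_rpow_one_div_of_pow_le {C : ℝ} (hR : 0 < R) (hlower : ∀ n, R ^ n ≤ u n)
    (hupper : ∀ n, u n ≤ C * R ^ n) :
    Tendsto (fun n : ℕ => u n ^ (1 / (n : ℝ))) atTop (𝓝 R) := by
  have hC : 0 < C := by simpa using one_pos.trans_le ((hlower 0).trans (hupper 0))
  have hroot {n : ℕ} (hn : n ≠ 0) : (R ^ n) ^ (1 / (n : ℝ)) = R := by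
    rw [one_div, Real.pow_rpow_inv_natCast hR.le hn]
  have hbound : Tendsto (fun n : ℕ => C ^ (1 / (n : ℝ)) * R) atTop (𝓝 R) := by
    simpa using (tendsto_const_nhds.rpow tendsto_one_div_atTop_nhds_zero_nat
      (.inl hC.ne')).mul_const R
  refine tendsto_of_tendsto_of_tendsto_of_le_of_le' tendsto_const_nhds hbound ?_ ?_
  all_goals filter_upwards [eventually_ne_atTop 0] with n hn
  · calc R = (R ^ n) ^ (1 / (n : ℝ)) := (hroot hn).symm
      _ ≤ u n ^ (1 / (n : ℝ)) := Real.rpow_le_rpow (by positivity) (hlower n) (by positivity)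
  · calc u n ^ (1 / (n : ℝ)) ≤ (C * R ^ n) ^ (1 / (n : ℝ)) :=
          Real.rpow_le_rpow ((pow_pos hR n).le.trans (hlower n)) (hupper n) (by positivity)
      _ = C ^ (1 / (n : ℝ)) * R := by rw [Real.mul_rpow hC.le (by positivity), hroot hn]

lemma tendsto_ofReal_div_rpow_neg (hu : ∀ n, 0 < u n) (hw : ∀ n, 0 < w n) (hR : R ≠ 0)
    (hulim : Tendsto (fun n : ℕ => u n ^ (1 / (n : ℝ))) atTop (𝓝 R))
    (hwlim : Tendsto (fun n : ℕ => w n ^ (1 / (n : ℝ))) atTop (𝓝 r)) :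
    Tendsto (fun n : ℕ => ENNReal.ofReal (u n / w n) ^ (-(1 / (n : ℝ)))) atTop
      (𝓝 (ENNReal.ofReal (r / R))) := by
  refine (ENNReal.tendsto_ofReal (hwlim.div hulim hR)).congr fun n => ?_
  rw [ENNReal.ofReal_rpow_of_pos (div_pos (hu n) (hw n)),
    Real.rpow_neg (div_pos (hu n) (hw n)).le, Real.div_rpow (hu n).le (hw n).le, inv_div,
    Pi.div_apply]

lemma chiV_eq_of_tendsto {μ : ℕ} {q : Kv} {G : Matrix (Fin μ) (Fin μ) (RatFunc Kv)}
    (hG : ∀ n, 0 < matGaussNorm (Gseq q G n)) (hfact : ∀ n, 0 < ‖qFactorial q n‖)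
    (hr : r ≤ R) (hR : 0 < R)
    (hGlim : Tendsto (fun n : ℕ => matGaussNorm (Gseq q G n) ^ (1 / (n : ℝ))) atTop (𝓝 R))
    (hflim : Tendsto (fun n : ℕ => ‖qFactorial q n‖ ^ (1 / (n : ℝ))) atTop (𝓝 r)) :
    chiV q G = ENNReal.ofReal (r / R) := by
  rw [chiV, (tendsto_ofReal_div_rpow_neg hG hfact hR.ne' hGlim hflim).liminf_eq]
  exact min_eq_right (ENNReal.ofReal_le_one.mpr (div_le_one_of_le₀ hr hR.le))

end Limits

theorem q_dwork_frobenius_general [IsUltrametricDist Kv] {p : ℕ} (hp : p.Prime)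
    (hpv : ‖(p : Kv)‖ < 1) {q : Kv} (hq1 : q ≠ 1)
    (hdw : ‖q - 1‖ < ‖(p : Kv)‖ ^ ((1 : ℝ) / ((p : ℝ) - 1)))
    {μ : ℕ} (a : Fin μ → RatFunc Kv) (hbig : 1 < ⨆ i, gaussNorm (a i)) :
    chiV q (companionMatrix a) =
      ENNReal.ofReal (‖(p : Kv)‖ ^ ((1 : ℝ) / ((p : ℝ) - 1)) /
        newtonRadius fun i => gaussNorm (a i)) := by
  obtain _ | m := μ
  · exact absurd hbig (by simp)
  have hp₀ := norm_prime_pos hp hdw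
  have hr : ‖(p : Kv)‖ ^ ((1 : ℝ) / ((p : ℝ) - 1)) ≤ 1 :=
    Real.rpow_le_one hp₀.le hpv.le (one_div_pos.mpr (prime_sub_one_pos hp)).le
  have hq := norm_eq_one_of_norm_sub_one_lt (hdw.trans_le hr)
  have hc (i) := gaussNorm_nonneg (a i)
  have hR := one_lt_newtonRadius hbig
  have hR₀ := one_pos.trans hR
  have hlower := pow_le_matGaussNorm_Gseq_companionMatrix hq hq1 hR (mul_newtonRadius_pow_le hc)
    (exists_mul_newtonRadius_pow_eq hc)
  have hupper := matGaussNorm_Gseq_companionMatrix_le hq hq1 hR (mul_newtonRadius_pow_le hc)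
  exact chiV_eq_of_tendsto (fun n => (pow_pos hR₀ n).trans_le (hlower n))
    (norm_qFactorial_pos hp hpv hdw) (hr.trans hR.le) hR₀
    (tendsto_rpow_one_div_of_pow_le hR₀ hlower hupper) (tendsto_norm_qFactorial_rpow hp hpv hdw)

/-- The q-analogue of the Dwork-Frobenius theorem (case κ_v = 1). -/
theorem q_dwork_frobenius
    {Kv : Type*} [NontriviallyNormedField Kv] [CompleteSpace Kv]
    (hna : ∀ x y : Kv, ‖x + y‖ ≤ max ‖x‖ ‖y‖)
    (p : ℕ) (hp : Nat.Prime p) (hpv : ‖(p : Kv)‖ < 1)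
    (q : Kv) (hq1 : ‖q‖ = 1) (hqru : ∀ m : ℕ, 0 < m → q ^ m ≠ 1)
    (κ : ℕ) (hκpos : 0 < κ) (hκlt : ‖1 - q ^ κ‖ < 1)
    (hκmin : ∀ m : ℕ, 0 < m → ‖1 - q ^ m‖ < 1 → κ ≤ m)
    (hdw : ‖1 - q ^ κ‖ < ‖(p : Kv)‖ ^ ((1 : ℝ) / ((p : ℝ) - 1)))
    (hκone : κ = 1)
    (μ : ℕ) (hμ : 1 ≤ μ) (a : Fin μ → RatFunc Kv)
    (G : Matrix (Fin μ) (Fin μ) (RatFunc Kv))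
    (hG : ∀ i j : Fin μ,
      G i j = if (j : ℕ) = μ - 1 then a i else if (i : ℕ) = (j : ℕ) + 1 then 1 else 0)
    (hbig : 1 < ⨆ i : Fin μ, gaussNorm (a i)) :
    chiV q G =
      ENNReal.ofReal (‖(p : Kv)‖ ^ ((1 : ℝ) / ((p : ℝ) - 1)) /
        ⨆ i : Fin μ, gaussNorm (a i) ^ ((1 : ℝ) / ((μ : ℝ) - ((i : ℕ) : ℝ)))) := by
  subst hκone
  have := IsUltrametricDist.isUltrametricDist_of_forall_norm_add_le_max_norm hna
  rw [pow_one, norm_sub_rev] at hdw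
  obtain rfl : G = companionMatrix a := Matrix.ext hG
  exact q_dwork_frobenius_general hp hpv (by simpa using hqru 1 one_pos) hdw a hbig
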